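/- For α ∈ ℂ with α ≠ 0, let q_α(x, y, z) = α(y + z/2)³ + zy² − zx² − x³. Then there exists a nonzero point (x, y, z) ∈ ℂ³ at which all three partial derivatives of q_α vanish if and only if α ∈ {−8/27, −32/121, 8}; the corresponding projective singular points are [0 : 1 : 1] for α = −8/27, [−2/3 : 4/3 : 1] for α = −32/121, and [−2/3 : −1/3 : 1] for α = 8. -/

import Mathlib

/-! The combination `2 ∂q/∂z - ∂q/∂y = 2 (y² - zy - x²)` is free of `α`, and `∂q/∂x = 0` says
`x = 0` or `x = -2z/3`. In the first case `y = 0` or `y = z`; in the second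
`(y - 4z/3) (y + z/3) = 0`. Each branch is a single projective point, and `∂q/∂y = 0` then is a
linear equation for `α`: the branch `x = y = 0` would need `α = 0`, and the other three give
`-8/27`, `-32/121` and `8`. This is `mem_singularSet14_iff`. Since the three values of `α` are
distinct, the three singular sets follow. -/

/-- The set of nonzero points of `ℂ³` at which all three partial derivatives of
`q_α(x,y,z) = α(y + z/2)³ + zy² - zx² - x³` vanish, namely
`∂q/∂x = -2zx - 3x²`, `∂q/∂y = 3α(y + z/2)² + 2zy`,
`∂q/∂z = (3/2)α(y + z/2)² + y² - x²`. -/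
def singularSet14 (α : ℂ) : Set (ℂ × ℂ × ℂ) :=
  {p | p ≠ 0 ∧
    -(2 * p.2.2 * p.1) - 3 * p.1 ^ 2 = 0 ∧
    3 * α * (p.2.1 + p.2.2 / 2) ^ 2 + 2 * p.2.2 * p.2.1 = 0 ∧
    3 / 2 * α * (p.2.1 + p.2.2 / 2) ^ 2 + p.2.1 ^ 2 - p.1 ^ 2 = 0}

/-- The classification behind all parts of the theorem: `[0:1:1]`, `[-2/3:4/3:1]` and
`[-2/3:-1/3:1]` are the only possible singular points, and each occurs for exactly one `α`. -/
theorem mem_singularSet14_iff {α : ℂ} (hα : α ≠ 0) (p : ℂ × ℂ × ℂ) :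
    p ∈ singularSet14 α ↔ ∃ c : ℂ, c ≠ 0 ∧
      ((α = -8 / 27 ∧ p = (0, c, c)) ∨
        (α = -32 / 121 ∧ p = (c * (-2 / 3), c * (4 / 3), c)) ∨
        (α = 8 ∧ p = (c * (-2 / 3), c * (-1 / 3), c))) := by
  obtain ⟨x, y, z⟩ := p
  simp only [singularSet14, Set.mem_ofPred_eq, Prod.mk.injEq, ne_eq, Prod.mk_eq_zero]
  constructor
  · rintro ⟨hp, h1, h2, h3⟩
    -- `2 ∂q/∂z - ∂q/∂y` does not involve `α`.
    have h4 : y ^ 2 - z * y - x ^ 2 = 0 := by linear_combination h3 - h2 / 2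
    have hx : x * (x + 2 / 3 * z) = 0 := by linear_combination -h1 / 3
    rcases mul_eq_zero.1 hx with hx | hx
    · subst hx
      have hy : y * (y - z) = 0 := by linear_combination h4
      rcases mul_eq_zero.1 hy with hy | hy
      · subst hy
        -- Here `∂q/∂y = 0` reads `(3/4) α z² = 0`, which forces the zero point.
        have hz : α * z ^ 2 = 0 := by linear_combination 4 / 3 * h2
        have hz0 : z = 0 := by simpa [hα] using hz
        exact absurd ⟨rfl, rfl, hz0⟩ hp
      · obtain rfl : y = z := sub_eq_zero.1 hy
        have hz : y ≠ 0 := fun h => hp ⟨rfl, h, h⟩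
        refine ⟨y, hz, Or.inl ⟨?_, rfl, rfl, rfl⟩⟩
        apply mul_right_cancel₀ (pow_ne_zero 2 hz)
        linear_combination 4 / 27 * h2
    · obtain rfl : x = z * (-2 / 3) := by linear_combination hx
      have hy : (y - z * (4 / 3)) * (y - z * (-1 / 3)) = 0 := by linear_combination h4
      rcases mul_eq_zero.1 hy with hy | hy
      · obtain rfl : y = z * (4 / 3) := sub_eq_zero.1 hy
        have hz : z ≠ 0 := fun h => hp (by simp [h])
        refine ⟨z, hz, Or.inr (Or.inl ⟨?_, rfl, rfl, rfl⟩)⟩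
        apply mul_right_cancel₀ (pow_ne_zero 2 hz)
        linear_combination 12 / 121 * h2
      · obtain rfl : y = z * (-1 / 3) := sub_eq_zero.1 hy
        have hz : z ≠ 0 := fun h => hp (by simp [h])
        refine ⟨z, hz, Or.inr (Or.inr ⟨?_, rfl, rfl, rfl⟩)⟩
        apply mul_right_cancel₀ (pow_ne_zero 2 hz)
        linear_combination 12 * h2
  · rintro ⟨c, hc, ⟨rfl, rfl, rfl, rfl⟩ | ⟨rfl, rfl, rfl, rfl⟩ | ⟨rfl, rfl, rfl, rfl⟩⟩ <;>
      exact ⟨fun h => hc h.2.2, by ring, by ring, by ring⟩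

/-- For `α ≠ 0`, the member `q_α = α(y+z/2)³ + zy² - zx² - x³` of the pencil has
a nonzero point where all three partials vanish iff `α ∈ {-8/27, -32/121, 8}`,
and the corresponding projective singular points are `[0:1:1]`,
`[-2/3 : 4/3 : 1]` and `[-2/3 : -1/3 : 1]` respectively. -/
theorem stmt_14 (α : ℂ) (hα : α ≠ 0) :
    ((singularSet14 α).Nonempty ↔ (α = -8 / 27 ∨ α = -32 / 121 ∨ α = 8)) ∧
    (α = -8 / 27 →
      singularSet14 α = {p : ℂ × ℂ × ℂ | ∃ c : ℂ, c ≠ 0 ∧ p = (0, c, c)}) ∧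
    (α = -32 / 121 →
      singularSet14 α =
        {p : ℂ × ℂ × ℂ | ∃ c : ℂ, c ≠ 0 ∧ p = (c * (-2 / 3), c * (4 / 3), c)}) ∧
    (α = 8 →
      singularSet14 α =
        {p : ℂ × ℂ × ℂ | ∃ c : ℂ, c ≠ 0 ∧ p = (c * (-2 / 3), c * (-1 / 3), c)}) := by
  refine ⟨⟨?_, ?_⟩, ?_, ?_, ?_⟩
  · rintro ⟨p, hp⟩
    obtain ⟨c, -, h | h | h⟩ := (mem_singularSet14_iff hα p).1 hp
    · exact Or.inl h.1
    · exact Or.inr (Or.inl h.1)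
    · exact Or.inr (Or.inr h.1)
  · rintro (h | h | h)
    · exact ⟨_, (mem_singularSet14_iff hα _).2 ⟨1, one_ne_zero, Or.inl ⟨h, rfl⟩⟩⟩
    · exact ⟨_, (mem_singularSet14_iff hα _).2 ⟨1, one_ne_zero, Or.inr (Or.inl ⟨h, rfl⟩)⟩⟩
    · exact ⟨_, (mem_singularSet14_iff hα _).2 ⟨1, one_ne_zero, Or.inr (Or.inr ⟨h, rfl⟩)⟩⟩
  all_goals
    rintro rfl
    ext p
    rw [mem_singularSet14_iff hα p, Set.mem_ofPred_eq]
    norm_num
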